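/- Let m ≥ 1 be an integer and let Y be a Gamma-distributed random variable with shape m and rate m (so E[Y] = 1). Let X be a nonnegative real random variable independent of Y and let C > 0 be real. Define erfc(x) = (2/√π) ∫_x^∞ e^{−t²} dt. Then E[ erfc( √( Y / (X + C) ) ) ] = 1 − (Γ(m + 1/2)/Γ(m)) (2/π) ∫_0^∞ z^{−1/2} e^{−z(1 + mC)} · ( ∑_{n=0}^{m−1} ((1−m)_n / ((3/2)_n n!)) z^n ) · E[e^{−m z X}] dz, where (a)_n denotes the Pochhammer symbol, so the inner sum is the polynomial ₁F₁(1 − m; 3/2; z). -/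

import Mathlib

/-!
Conditionally on `X`, put `b = X + C` and `w = 1 / (1 + m b)`. Since
`erfc √(y/b) = (2/√π) ∫_0^∞ 1{y < b t²} e^{-t²} dt`, exchanging integrals gives
`E_Y[erfc √(Y/b)] = (2/√π) ∫_0^∞ e^{-t²} P(Y < b t²) dt` (`integral_erfc_eq_integral_cdf`).
For integer `m` the tail of `Y` is `e^{-ms} ∑_{k<m} (ms)^k / k!` (`gammaMeasure_real_Iio`), so
Gaussian moments turn this into
`1 - w^{1/2} π^{-1/2} ∑_{k<m} Γ(k+1/2)/k! (1-w)^k`.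

The `z`-integral of the claim, evaluated termwise by Gamma integrals, is a polynomial in `w` times
`w^{1/2}`, with coefficients proportional to `(m-1 choose n) (-1)^n / (2n+1)`. The two polynomials
agree by `truncated_binomial_identity`, an induction on `m` resting on `oddSum_recurrence`.

This proves the claim for a deterministic denominator (`integral_erfc_gamma`); independence and
Fubini, with `e^{-mzX} ≤ 1` as domination, then average it over `X`.
-/

open MeasureTheory ProbabilityTheory Real

/-- The complementary error function `erfc x = (2/√π) ∫_x^∞ e^{−t²} dt`. -/
noncomputable def erfc (x : ℝ) : ℝ :=
  (2 / Real.sqrt π) * ∫ t in Set.Ioi x, Real.exp (-t ^ 2)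

/-- The function `e^{-ry} ∑_{k ≤ M} (ry)^k / k!`, which for `y ≥ 0` is `P(Y > y)` for a
Gamma variable `Y` of shape `M + 1` and rate `r`. -/
noncomputable def erlangTail (r : ℝ) (M : ℕ) (y : ℝ) : ℝ :=
  Real.exp (-(r * y)) * ∑ k ∈ Finset.range (M + 1), (r * y) ^ k / (k.factorial : ℝ)

/-- The derivative telescopes: only the top term of the sum survives. -/
lemma hasDerivAt_erlangTail (r : ℝ) (M : ℕ) (y : ℝ) :
    HasDerivAt (erlangTail r M) (-(r * (r * y) ^ M / (M.factorial : ℝ) * Real.exp (-(r * y)))) y := by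
  have hlin : HasDerivAt (fun y : ℝ => r * y) r y := by
    simpa using (hasDerivAt_id y).const_mul r
  have hexp : HasDerivAt (fun y : ℝ => Real.exp (-(r * y))) (Real.exp (-(r * y)) * (-r)) y :=
    hlin.neg.exp
  induction M with
  | zero =>
    have h : erlangTail r 0 = fun y => Real.exp (-(r * y)) := by
      funext y; simp [erlangTail]
    rw [h]
    convert hexp using 1
    simp; ring
  | succ M ih =>
    have h : erlangTail r (M + 1) = fun y => erlangTail r M y +
        Real.exp (-(r * y)) * ((r * y) ^ (M + 1) / ((M + 1).factorial : ℝ)) := by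
      funext y; simp only [erlangTail]; rw [Finset.sum_range_succ _ (M + 1)]; ring
    rw [h]
    have h2 := ih.add (hexp.mul ((hlin.pow (M + 1)).div_const ((M + 1).factorial : ℝ)))
    refine h2.congr_deriv ?_
    have : ((M + 1).factorial : ℝ) = (M + 1) * M.factorial := by
      rw [Nat.factorial_succ]; push_cast; ring
    have h0 : (M.factorial : ℝ) ≠ 0 := by positivity
    have h1 : (M : ℝ) + 1 ≠ 0 := by positivity
    simp only [this, Pi.pow_apply, Nat.add_sub_cancel]
    push_cast
    field_simp
    ring

lemma tendsto_erlangTail {r : ℝ} (hr : 0 < r) (M : ℕ) :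
    Filter.Tendsto (erlangTail r M) Filter.atTop (nhds 0) := by
  have h : ∀ k ∈ Finset.range (M + 1), Filter.Tendsto
      (fun y : ℝ => ((r * y) ^ k * Real.exp (-(r * y))) / (k.factorial : ℝ))
      Filter.atTop (nhds 0) := by
    intro k _
    have h1 := (Real.tendsto_pow_mul_exp_neg_atTop_nhds_zero k).comp
      (Filter.tendsto_id.const_mul_atTop hr)
    simpa using h1.div_const (k.factorial : ℝ)
  have h2 := tendsto_finsetSum _ h
  simp only [Finset.sum_const_zero] at h2
  refine h2.congr fun y => ?_
  rw [erlangTail, Finset.mul_sum]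
  exact Finset.sum_congr rfl fun k _ => by ring

lemma gammaMeasure_real_Iio {r : ℝ} (hr : 0 < r) (M : ℕ) {s : ℝ} (hs : 0 ≤ s) :
    (gammaMeasure ((M + 1 : ℕ) : ℝ) r).real (Set.Iio s) = 1 - erlangTail r M s := by
  have ha : (0 : ℝ) < ((M + 1 : ℕ) : ℝ) := by positivity
  have := isProbabilityMeasure_gammaMeasure ha hr
  rw [← Set.compl_Ici, probReal_compl_eq_one_sub measurableSet_Ici]
  congr 1
  have h1 : (gammaMeasure ((M + 1 : ℕ) : ℝ) r).real (Set.Ici s)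
      = ∫ y in Set.Ici s, gammaPDFReal ((M + 1 : ℕ) : ℝ) r y := by
    rw [gammaMeasure, measureReal_def, withDensity_apply _ measurableSet_Ici]
    refine (integral_eq_lintegral_of_nonneg_ae ?_ ?_).symm
    · exact ae_of_all _ fun b ↦ gammaPDFReal_nonneg ha hr b
    · fun_prop
  rw [h1, integral_Ici_eq_integral_Ioi]
  have hd : ∀ y, HasDerivAt (fun y => -erlangTail r M y)
      (r * (r * y) ^ M / (M.factorial : ℝ) * Real.exp (-(r * y))) y := fun y => by
    simpa using (hasDerivAt_erlangTail r M y).fun_neg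
  have h2 := integral_Ioi_of_hasDerivAt_of_nonneg (a := s) (hd s).continuousAt.continuousWithinAt
    (fun y _ => hd y) (fun y hy => by
      have : 0 < y := lt_of_le_of_lt hs hy
      positivity) (tendsto_erlangTail hr M).neg
  rw [show erlangTail r M s = -0 - -erlangTail r M s by ring, ← h2]
  refine setIntegral_congr_fun measurableSet_Ioi fun y hy => ?_
  have hy0 : 0 < y := lt_of_le_of_lt hs hy
  simp only [gammaPDFReal, if_pos hy0.le]
  rw [show ((M + 1 : ℕ) : ℝ) - 1 = M by push_cast; ring, Real.rpow_natCast, Real.rpow_natCast]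
  push_cast
  rw [Real.Gamma_nat_eq_factorial]
  ring

lemma Gamma_half_succ (n : ℕ) :
    Real.Gamma (((n + 1 : ℕ) : ℝ) + 1 / 2) = ((n : ℝ) + 1 / 2) * Real.Gamma ((n : ℝ) + 1 / 2) := by
  rw [← Real.Gamma_add_one (by positivity)]
  congr 1; push_cast; ring

lemma ascPochhammer_three_half (n : ℕ) :
    (ascPochhammer ℝ n).eval ((3 : ℝ) / 2) * √π
      = (2 * n + 1) * Real.Gamma ((n : ℝ) + 1 / 2) := by
  induction n with
  | zero =>
    have : Real.Gamma (1 / 2) = √π := Real.Gamma_one_half_eq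
    simp only [ascPochhammer_zero, Polynomial.eval_one, Nat.cast_zero, zero_add, mul_zero, this]
  | succ n ih =>
    rw [ascPochhammer_succ_eval, Gamma_half_succ]
    push_cast
    linear_combination (3 / 2 + (n : ℝ)) * ih

/-- The Kummer coefficients times the Gamma moments are signed binomials over odd numbers,
because `(3/2)_n = (2n+1) Γ(n+1/2)/√π` and `(-M)_n = (-1)^n n! (M choose n)`. -/
lemma kummer_coeff_mul_Gamma (M n : ℕ) :
    (ascPochhammer ℝ n).eval (1 - ((M + 1 : ℕ) : ℝ)) /
      ((ascPochhammer ℝ n).eval ((3 : ℝ) / 2) * n.factorial) * Real.Gamma ((n : ℝ) + 1 / 2)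
      = √π * ((M.choose n : ℝ) * (-1) ^ n / (2 * n + 1)) := by
  have h1 : (ascPochhammer ℝ n).eval (1 - ((M + 1 : ℕ) : ℝ))
      = (-1) ^ n * (n.factorial * M.choose n) := by
    rw [show (1 - ((M + 1 : ℕ) : ℝ)) = -(M : ℝ) by push_cast; ring,
      ascPochhammer_eval_neg_eq_descPochhammer, descPochhammer_eval_eq_descFactorial,
      Nat.descFactorial_eq_factorial_mul_choose]
    push_cast; ring
  have hpi : √π ≠ 0 := by positivity
  have hG : Real.Gamma ((n : ℝ) + 1 / 2) ≠ 0 := (Real.Gamma_pos_of_pos (by positivity)).ne'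
  have h3 : (ascPochhammer ℝ n).eval ((3 : ℝ) / 2)
      = (2 * n + 1) * Real.Gamma ((n : ℝ) + 1 / 2) / √π := by
    rw [eq_div_iff hpi, ascPochhammer_three_half]
  have hn : (n.factorial : ℝ) ≠ 0 := by positivity
  have h21 : (2 * (n : ℝ) + 1) ≠ 0 := by positivity
  rw [h1, h3]
  field_simp

/-- The recurrence `(2M+3) S_{M+1} - (2M+2) S_M = (1-w)^{M+1}` satisfied by
`S_M(w) = ∑_n (M choose n) (-w)^n / (2n+1) = ∫_0^1 (1 - w u²)^M du`. -/
lemma oddSum_recurrence (M : ℕ) (w : ℝ) :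
    (2 * M + 3) * ∑ n ∈ Finset.range (M + 2), (((M + 1).choose n : ℝ) * (-1) ^ n / (2 * n + 1)) * w ^ n
      - (2 * M + 2) * ∑ n ∈ Finset.range (M + 1), ((M.choose n : ℝ) * (-1) ^ n / (2 * n + 1)) * w ^ n
      = (1 - w) ^ (M + 1) := by
  have hext : ∑ n ∈ Finset.range (M + 1), ((M.choose n : ℝ) * (-1) ^ n / (2 * n + 1)) * w ^ n
      = ∑ n ∈ Finset.range (M + 2), ((M.choose n : ℝ) * (-1) ^ n / (2 * n + 1)) * w ^ n := by
    rw [Finset.sum_range_succ _ (M + 1)]; simp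
  rw [hext, Finset.mul_sum, Finset.mul_sum, ← Finset.sum_sub_distrib,
    show 1 - w = -w + 1 by ring, add_pow]
  refine Finset.sum_congr rfl fun n hn => ?_
  have hle : n ≤ M + 1 := by simpa [Nat.lt_succ_iff] using hn
  have hc : ((M + 1).choose n : ℝ) * ((M : ℝ) + 1 - n) = (M.choose n : ℝ) * (M + 1) := by
    have h := Nat.choose_mul_succ_eq M n
    have h' : (M.choose n : ℝ) * (M + 1) = ((M + 1).choose n : ℝ) * ((M + 1 - n : ℕ) : ℝ) := by
      exact_mod_cast h
    rw [Nat.cast_sub hle] at h'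
    push_cast at h'
    exact h'.symm
  have h21 : (2 * (n : ℝ) + 1) ≠ 0 := by positivity
  rw [one_pow, mul_one, show (-w) ^ n = (-1) ^ n * w ^ n by rw [← mul_pow]; ring]
  field_simp
  linear_combination (2 * w ^ n) * hc

/-- Re-expansion in powers of `w` of the truncated binomial series of `w^{-1/2}` around `w = 1`
(both sides scaled by `√π`). -/
lemma truncated_binomial_identity (M : ℕ) (w : ℝ) :
    ∑ k ∈ Finset.range (M + 1), Real.Gamma ((k : ℝ) + 1 / 2) / k.factorial * (1 - w) ^ k
      = 2 * Real.Gamma (((M + 1 : ℕ) : ℝ) + 1 / 2) / M.factorial *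
        ∑ n ∈ Finset.range (M + 1), ((M.choose n : ℝ) * (-1) ^ n / (2 * n + 1)) * w ^ n := by
  induction M with
  | zero =>
    rw [Gamma_half_succ]
    simp
  | succ M ih =>
    rw [Finset.sum_range_succ, ih, ← oddSum_recurrence M w, Gamma_half_succ (M + 1)]
    have : ((M + 1).factorial : ℝ) = (M + 1) * M.factorial := by
      rw [Nat.factorial_succ]; push_cast; ring
    have h0 : (M.factorial : ℝ) ≠ 0 := by positivity
    have h1 : (M : ℝ) + 1 ≠ 0 := by positivity
    rw [this]
    push_cast
    field_simp
    ring

lemma erfc_antitone : Antitone erfc := by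
  intro x y hxy
  have hint : Integrable (fun t : ℝ => Real.exp (-t ^ 2)) := by
    simpa using integrable_exp_neg_mul_sq one_pos
  unfold erfc
  refine mul_le_mul_of_nonneg_left ?_ (by positivity)
  exact setIntegral_mono_set hint.integrableOn (ae_of_all _ fun t => (Real.exp_pos _).le)
    (Set.Ioi_subset_Ioi hxy).eventuallyLE

lemma erfc_nonneg (x : ℝ) : 0 ≤ erfc x := by
  unfold erfc
  have : 0 ≤ ∫ t in Set.Ioi x, Real.exp (-t ^ 2) :=
    integral_nonneg fun t => (Real.exp_pos _).le
  positivity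

lemma integral_Ioi_exp_neg_sq : ∫ t in Set.Ioi (0 : ℝ), Real.exp (-t ^ 2) = √π / 2 := by
  simpa using integral_gaussian_Ioi 1

lemma erfc_zero : erfc 0 = 1 := by
  have : √π ≠ 0 := by positivity
  rw [erfc, integral_Ioi_exp_neg_sq]
  field_simp

/-- `erfc √(y/b)` as an integral of an indicator in which `y` and `t` are separated. -/
lemma erfc_sqrt_div {b : ℝ} (hb : 0 < b) (y : ℝ) :
    erfc √(y / b) = (2 / √π) * ∫ t in Set.Ioi (0 : ℝ),
      (Set.Iio (b * t ^ 2)).indicator (fun _ => Real.exp (-t ^ 2)) y := by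
  unfold erfc
  congr 1
  rw [← integral_indicator measurableSet_Ioi, ← integral_indicator measurableSet_Ioi]
  congr 1
  funext t
  by_cases ht : 0 < t
  · have h : √(y / b) < t ↔ y < b * t ^ 2 := by
      rw [Real.sqrt_lt' ht, div_lt_iff₀ hb, mul_comm]
    by_cases hy : y < b * t ^ 2
    · simp [Set.indicator, ht, hy, h]
    · simp [Set.indicator, hy, h]
  · have h : ¬ √(y / b) < t := fun h => ht (lt_of_le_of_lt (Real.sqrt_nonneg _) h)
    simp [Set.indicator, ht, h]

lemma integral_even_gaussian_moment {A : ℝ} (hA : 0 < A) (k : ℕ) :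
    IntegrableOn (fun t : ℝ => t ^ (2 * k) * Real.exp (-A * t ^ 2)) (Set.Ioi 0) ∧
    ∫ t in Set.Ioi (0 : ℝ), t ^ (2 * k) * Real.exp (-A * t ^ 2)
      = (1 / 2) * ((1 / A) ^ k * (1 / A) ^ (1 / 2 : ℝ) * Real.Gamma ((k : ℝ) + 1 / 2)) := by
  have hq : (-1 : ℝ) < ((2 * k : ℕ) : ℝ) := by
    have : (0 : ℝ) ≤ ((2 * k : ℕ) : ℝ) := Nat.cast_nonneg _
    linarith
  constructor
  · have h := integrableOn_rpow_mul_exp_neg_mul_sq hA hq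
    simpa only [Real.rpow_natCast] using h
  · have h := integral_rpow_mul_exp_neg_mul_rpow (p := 2) (by norm_num) hq hA
    simp only [Real.rpow_natCast, Real.rpow_two] at h
    rw [h, ← Real.rpow_natCast (1 / A) k, ← Real.rpow_add (by positivity), one_div A,
      Real.inv_rpow hA.le, ← Real.rpow_neg hA.le]
    rw [show -(((2 * k : ℕ) : ℝ) + 1) / 2 = -((k : ℝ) + 1 / 2) by push_cast; ring,
      show (((2 * k : ℕ) : ℝ) + 1) / 2 = (k : ℝ) + 1 / 2 by push_cast; ring]
    ring

lemma integral_half_gamma_moment {A : ℝ} (hA : 0 < A) (n : ℕ) :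
    IntegrableOn (fun z : ℝ => z ^ (-(1 / 2) : ℝ) * Real.exp (-z * A) * z ^ n) (Set.Ioi 0) ∧
    ∫ z in Set.Ioi (0 : ℝ), z ^ (-(1 / 2) : ℝ) * Real.exp (-z * A) * z ^ n
      = (1 / A) ^ n * (1 / A) ^ (1 / 2 : ℝ) * Real.Gamma ((n : ℝ) + 1 / 2) := by
  have hcongr : ∀ z ∈ Set.Ioi (0 : ℝ), z ^ (((n : ℝ) + 1 / 2) - 1) * Real.exp (-(A * z))
      = z ^ (-(1 / 2) : ℝ) * Real.exp (-z * A) * z ^ n := by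
    intro z hz
    rw [show ((n : ℝ) + 1 / 2) - 1 = -(1 / 2) + (n : ℝ) by ring,
      Real.rpow_add hz, Real.rpow_natCast, show -(A * z) = -z * A by ring]
    ring
  constructor
  · have hs : (-1 : ℝ) < ((n : ℝ) + 1 / 2) - 1 := by
      have : (0 : ℝ) ≤ n := Nat.cast_nonneg _
      linarith
    have h := integrableOn_rpow_mul_exp_neg_mul_rpow hs one_pos hA
    refine h.congr_fun (fun z hz => ?_) measurableSet_Ioi
    simp only [Real.rpow_one]
    rw [← hcongr z hz, neg_mul]
  · rw [← setIntegral_congr_fun measurableSet_Ioi hcongr,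
      Real.integral_rpow_mul_exp_neg_mul_Ioi (by positivity) hA,
      Real.rpow_add (by positivity), Real.rpow_natCast]

/-- Exchanging the expectation with the Gaussian integral defining `erfc` leaves a Gaussian
average of the distribution function of `ν`. -/
lemma integral_erfc_eq_integral_cdf (ν : Measure ℝ) [IsProbabilityMeasure ν] {b : ℝ} (hb : 0 < b) :
    ∫ y, erfc √(y / b) ∂ν
      = (2 / √π) * ∫ t in Set.Ioi (0 : ℝ), Real.exp (-t ^ 2) * ν.real (Set.Iio (b * t ^ 2)) := by
  simp_rw [erfc_sqrt_div hb]
  rw [integral_const_mul, integral_integral_swap]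
  · congr 2
    funext t
    rw [integral_indicator_const _ measurableSet_Iio, smul_eq_mul, mul_comm]
  · have hint : Integrable (fun t : ℝ => Real.exp (-t ^ 2)) (volume.restrict (Set.Ioi 0)) := by
      have : Integrable (fun t : ℝ => Real.exp (-t ^ 2)) := by
        simpa using integrable_exp_neg_mul_sq one_pos
      exact this.integrableOn
    have hprod : Integrable (fun p : ℝ × ℝ => Real.exp (-p.2 ^ 2))
        (ν.prod (volume.restrict (Set.Ioi 0))) := hint.comp_snd ν
    have hset : MeasurableSet {p : ℝ × ℝ | p.1 < b * p.2 ^ 2} :=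
      measurableSet_lt (by fun_prop) (by fun_prop)
    refine (hprod.indicator hset).congr (ae_of_all _ fun p => ?_)
    simp [Function.uncurry, Set.indicator]

/-- The identity for a deterministic denominator `b`. -/
lemma integral_erfc_gamma (M : ℕ) {b : ℝ} (hb : 0 < b) :
    ∫ y, erfc √(y / b) ∂(gammaMeasure ((M + 1 : ℕ) : ℝ) ((M + 1 : ℕ) : ℝ))
      = 1 - (Real.Gamma (((M + 1 : ℕ) : ℝ) + 1 / 2) / Real.Gamma ((M + 1 : ℕ) : ℝ)) * (2 / π) *
        ∫ z in Set.Ioi (0 : ℝ), z ^ (-(1 / 2) : ℝ) *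
          Real.exp (-z * (1 + ((M + 1 : ℕ) : ℝ) * b)) *
            (∑ n ∈ Finset.range (M + 1),
              ((ascPochhammer ℝ n).eval (1 - ((M + 1 : ℕ) : ℝ)) /
                ((ascPochhammer ℝ n).eval ((3 : ℝ) / 2) * Nat.factorial n)) * z ^ n) := by
  set m : ℝ := ((M + 1 : ℕ) : ℝ) with hm
  have hm0 : 0 < m := by positivity
  have := isProbabilityMeasure_gammaMeasure hm0 hm0
  set A : ℝ := 1 + m * b with hAdef
  have hA : 0 < A := by positivity
  set w : ℝ := 1 / A with hw
  have hpi : √π ≠ 0 := by positivity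
  have hpi2 : √π * √π = π := Real.mul_self_sqrt Real.pi_pos.le
  have hint : IntegrableOn (fun t : ℝ => Real.exp (-t ^ 2)) (Set.Ioi 0) := by
    have : Integrable (fun t : ℝ => Real.exp (-t ^ 2)) := by
      simpa using integrable_exp_neg_mul_sq one_pos
    exact this.integrableOn
  have hL : ∫ t in Set.Ioi (0 : ℝ),
      Real.exp (-t ^ 2) * (gammaMeasure m m).real (Set.Iio (b * t ^ 2))
      = √π / 2 - ∑ k ∈ Finset.range (M + 1), ((m * b) ^ k / (k.factorial : ℝ)) *
        ((1 / 2) * (w ^ k * w ^ (1 / 2 : ℝ) * Real.Gamma ((k : ℝ) + 1 / 2))) := by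
    have h1 : ∀ t : ℝ, Real.exp (-t ^ 2) * (gammaMeasure m m).real (Set.Iio (b * t ^ 2))
        = Real.exp (-t ^ 2) - ∑ k ∈ Finset.range (M + 1), ((m * b) ^ k / (k.factorial : ℝ)) *
          (t ^ (2 * k) * Real.exp (-A * t ^ 2)) := by
      intro t
      rw [gammaMeasure_real_Iio hm0 M (by positivity), erlangTail, mul_sub, mul_one,
        Finset.mul_sum, Finset.mul_sum]
      congr 1
      refine Finset.sum_congr rfl fun k _ => ?_
      rw [show -A * t ^ 2 = -t ^ 2 + -(m * (b * t ^ 2)) by rw [hAdef]; ring, Real.exp_add,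
        pow_mul]
      ring
    simp_rw [h1]
    have hk : ∀ k ∈ Finset.range (M + 1), IntegrableOn (fun t : ℝ =>
        ((m * b) ^ k / (k.factorial : ℝ)) * (t ^ (2 * k) * Real.exp (-A * t ^ 2))) (Set.Ioi 0) :=
      fun k _ => (integral_even_gaussian_moment hA k).1.const_mul _
    rw [integral_sub hint (integrable_finsetSum _ hk), integral_Ioi_exp_neg_sq,
      integral_finsetSum _ hk]
    simp_rw [integral_const_mul, (integral_even_gaussian_moment hA _).2, hw]
  have hR : ∫ z in Set.Ioi (0 : ℝ), z ^ (-(1 / 2) : ℝ) * Real.exp (-z * A) *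
            (∑ n ∈ Finset.range (M + 1), ((ascPochhammer ℝ n).eval (1 - m) /
                ((ascPochhammer ℝ n).eval ((3 : ℝ) / 2) * Nat.factorial n)) * z ^ n)
      = √π * w ^ (1 / 2 : ℝ) * ∑ n ∈ Finset.range (M + 1),
          ((M.choose n : ℝ) * (-1) ^ n / (2 * n + 1)) * w ^ n := by
    have h1 : ∀ z : ℝ, z ^ (-(1 / 2) : ℝ) * Real.exp (-z * A) *
            (∑ n ∈ Finset.range (M + 1), ((ascPochhammer ℝ n).eval (1 - m) /
                ((ascPochhammer ℝ n).eval ((3 : ℝ) / 2) * Nat.factorial n)) * z ^ n)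
        = ∑ n ∈ Finset.range (M + 1), ((ascPochhammer ℝ n).eval (1 - m) /
                ((ascPochhammer ℝ n).eval ((3 : ℝ) / 2) * Nat.factorial n)) *
            (z ^ (-(1 / 2) : ℝ) * Real.exp (-z * A) * z ^ n) := by
      intro z
      rw [Finset.mul_sum]
      exact Finset.sum_congr rfl fun n _ => by ring
    simp_rw [h1]
    rw [integral_finsetSum _ fun n _ => (integral_half_gamma_moment hA n).1.const_mul _,
      Finset.mul_sum]
    refine Finset.sum_congr rfl fun n _ => ?_
    rw [integral_const_mul, (integral_half_gamma_moment hA n).2]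
    linear_combination (w ^ n * w ^ (1 / 2 : ℝ)) * kummer_coeff_mul_Gamma M n
  have hsum : ∑ k ∈ Finset.range (M + 1), ((m * b) ^ k / (k.factorial : ℝ)) *
        ((1 / 2) * (w ^ k * w ^ (1 / 2 : ℝ) * Real.Gamma ((k : ℝ) + 1 / 2)))
      = (1 / 2) * w ^ (1 / 2 : ℝ) * (2 * Real.Gamma (m + 1 / 2) / M.factorial *
        ∑ n ∈ Finset.range (M + 1), ((M.choose n : ℝ) * (-1) ^ n / (2 * n + 1)) * w ^ n) := by
    rw [← truncated_binomial_identity, Finset.mul_sum]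
    refine Finset.sum_congr rfl fun k _ => ?_
    have hbw : m * b * w = 1 - w := by
      rw [hw]; field_simp; rw [hAdef]; ring
    rw [← hbw, mul_pow (m * b) w]
    ring
  have hG : Real.Gamma m = M.factorial := by
    rw [hm]; push_cast; exact Real.Gamma_nat_eq_factorial M
  have hfac : (M.factorial : ℝ) ≠ 0 := by positivity
  rw [integral_erfc_eq_integral_cdf _ hb, hL, hR, hsum, hG,
    show 2 / π = 2 / (√π * √π) by rw [hpi2]]
  field_simp

/-- Hamdi's lemma (general integer `m ≥ 1`): for `Y ~ Gamma(m, m)` (unit mean), `X ≥ 0`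
independent of `Y`, and `C > 0`,
`E[erfc(√(Y/(X+C)))] = 1 − (Γ(m+1/2)/Γ(m)) (2/π) ∫_0^∞ z^{−1/2} e^{−z(1+mC)}
  (∑_{n=0}^{m−1} ((1−m)_n / ((3/2)_n n!)) z^n) E[e^{−mzX}] dz`,
the inner sum being the polynomial `₁F₁(1 − m; 3/2; z)`. -/
theorem stmt11 {Ω : Type*} [MeasurableSpace Ω] (μ : Measure Ω) [IsProbabilityMeasure μ]
    (m : ℕ) (hm : 1 ≤ m)
    (Y X : Ω → ℝ) (hY : Measurable Y) (hX : Measurable X)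
    (hYgamma : μ.map Y = gammaMeasure m m)
    (hXnonneg : ∀ ω, 0 ≤ X ω)
    (hindep : IndepFun Y X μ)
    (C : ℝ) (hC : 0 < C) :
    ∫ ω, erfc (Real.sqrt (Y ω / (X ω + C))) ∂μ =
      1 - (Real.Gamma (m + 1/2) / Real.Gamma m) * (2 / π) *
        ∫ z in Set.Ioi (0:ℝ),
          z ^ (-(1/2) : ℝ) * Real.exp (-z * (1 + m * C)) *
            (∑ n ∈ Finset.range m,
              ((ascPochhammer ℝ n).eval (1 - (m : ℝ)) /
                ((ascPochhammer ℝ n).eval ((3:ℝ)/2) * Nat.factorial n)) * z ^ n) *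
            ∫ ω, Real.exp (-(m : ℝ) * z * X ω) ∂μ := by
  obtain ⟨M, rfl⟩ : ∃ M, m = M + 1 := ⟨m - 1, by omega⟩
  have hm0 : (0 : ℝ) < ((M + 1 : ℕ) : ℝ) := by positivity
  have hν := isProbabilityMeasure_gammaMeasure hm0 hm0
  have hXprob : IsProbabilityMeasure (μ.map X) := Measure.isProbabilityMeasure_map hX.aemeasurable
  set m : ℝ := ((M + 1 : ℕ) : ℝ) with hm_def
  set P : ℝ → ℝ := fun z => ∑ n ∈ Finset.range (M + 1),
    ((ascPochhammer ℝ n).eval (1 - m) /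
      ((ascPochhammer ℝ n).eval ((3 : ℝ) / 2) * Nat.factorial n)) * z ^ n with hP
  set K : ℝ := Real.Gamma (m + 1 / 2) / Real.Gamma m * (2 / π) with hK
  have hA : 0 < 1 + m * C := by positivity
  have hmeas : Measurable fun p : ℝ × ℝ => erfc √(p.1 / (p.2 + C)) :=
    erfc_antitone.measurable.comp (by fun_prop)
  have hg : Integrable (fun p : ℝ × ℝ => erfc √(p.1 / (p.2 + C)))
      ((gammaMeasure m m).prod (μ.map X)) := by
    refine Integrable.mono' (integrable_const (1 : ℝ)) hmeas.aestronglyMeasurable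
      (ae_of_all _ fun p => ?_)
    rw [Real.norm_of_nonneg (erfc_nonneg _), ← erfc_zero]
    exact erfc_antitone (Real.sqrt_nonneg _)
  have hmap := (indepFun_iff_map_prod_eq_prod_map_map hY.aemeasurable hX.aemeasurable).1 hindep
  rw [hYgamma] at hmap
  -- independence lets the expectation over `Y` be taken first, with `X` frozen
  have h1 : ∫ ω, erfc √(Y ω / (X ω + C)) ∂μ
      = ∫ ω, (∫ y, erfc √(y / (X ω + C)) ∂(gammaMeasure m m)) ∂μ := by
    have e1 := integral_map (μ := μ) (hY.prodMk hX).aemeasurable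
      (f := fun p : ℝ × ℝ => erfc √(p.1 / (p.2 + C))) hmeas.aestronglyMeasurable
    rw [hmap, integral_prod_symm _ hg] at e1
    rw [← e1, integral_map hX.aemeasurable]
    exact hg.swap.aestronglyMeasurable.integral_prod_right'
  have hh : IntegrableOn (fun z : ℝ => z ^ (-(1 / 2) : ℝ) * Real.exp (-z * (1 + m * C)) * P z)
      (Set.Ioi 0) := by
    have h2 : IntegrableOn (fun z : ℝ => ∑ n ∈ Finset.range (M + 1),
        ((ascPochhammer ℝ n).eval (1 - m) /
          ((ascPochhammer ℝ n).eval ((3 : ℝ) / 2) * Nat.factorial n)) *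
          (z ^ (-(1 / 2) : ℝ) * Real.exp (-z * (1 + m * C)) * z ^ n)) (Set.Ioi 0) :=
      integrable_finsetSum _ fun n _ => (integral_half_gamma_moment hA n).1.const_mul _
    refine h2.congr_fun (fun z _ => ?_) measurableSet_Ioi
    simp only [hP, Finset.mul_sum]
    exact Finset.sum_congr rfl fun n _ => by ring
  -- `e^{-mzX} ≤ 1` dominates the joint integrand by the `z`-only factor
  have hjoint : Integrable (Function.uncurry fun (ω : Ω) (z : ℝ) =>
      z ^ (-(1 / 2) : ℝ) * Real.exp (-z * (1 + m * C)) * P z * Real.exp (-m * z * X ω))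
      (μ.prod (volume.restrict (Set.Ioi 0))) := by
    have hz : Integrable (fun p : Ω × ℝ =>
        p.2 ^ (-(1 / 2) : ℝ) * Real.exp (-p.2 * (1 + m * C)) * P p.2)
        (μ.prod (volume.restrict (Set.Ioi 0))) := Integrable.comp_snd hh μ
    have hpos : ∀ᵐ p ∂(μ.prod (volume.restrict (Set.Ioi (0 : ℝ)))), 0 < p.2 :=
      Measure.quasiMeasurePreserving_snd.ae (ae_restrict_mem measurableSet_Ioi)
    have hexpm : Measurable fun p : Ω × ℝ => Real.exp (-m * p.2 * X p.1) := by fun_prop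
    refine hz.norm.mono' (hz.aestronglyMeasurable.mul hexpm.aestronglyMeasurable) ?_
    filter_upwards [hpos] with p hp
    have hle : Real.exp (-m * p.2 * X p.1) ≤ 1 := by
      rw [Real.exp_le_one_iff]
      have := mul_nonneg (mul_nonneg hm0.le hp.le) (hXnonneg p.1)
      linarith
    simp only [Function.uncurry]
    rw [norm_mul, Real.norm_of_nonneg (Real.exp_pos (-m * p.2 * X p.1)).le]
    exact mul_le_of_le_one_right (norm_nonneg _) hle
  have h3 : ∀ ω, ∫ y, erfc √(y / (X ω + C)) ∂(gammaMeasure m m)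
      = 1 - K * ∫ z in Set.Ioi (0 : ℝ),
        z ^ (-(1 / 2) : ℝ) * Real.exp (-z * (1 + m * C)) * P z * Real.exp (-m * z * X ω) := by
    intro ω
    have hb : 0 < X ω + C := add_pos_of_nonneg_of_pos (hXnonneg ω) hC
    rw [integral_erfc_gamma M hb]
    congr 2
    refine integral_congr_ae (ae_of_all _ fun z => ?_)
    simp only [← hm_def]
    rw [show -z * (1 + m * (X ω + C)) = -z * (1 + m * C) + -m * z * X ω by ring, Real.exp_add]
    simp only [hP]
    ring
  rw [h1]
  simp_rw [h3]
  have hJ := hjoint.integral_prod_left.const_mul K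
  simp only [Function.uncurry_apply_pair] at hJ
  rw [integral_sub (integrable_const _) hJ,
    integral_const_mul, integral_integral_swap hjoint]
  simp_rw [integral_const_mul]
  simp only [integral_const, probReal_univ, one_smul, hP]
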